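/- Let m, v, N ∈ ℕ with v ≤ N, let Ω be a compact subset of ℝ^d with a Borel probability measure μ, let 1 ≤ p < ∞, and let D_N = {g_1,…,g_N} ⊂ C(Ω) be a system of N functions. For each J ⊆ {1,…,N} with |J| = v put X_J := span{g_i : i ∈ J}, and let Σ_v(D_N) be the union of all such X_J. Assume points ξ^1,…,ξ^m ∈ Ω are such that ‖u‖_p ≤ D max_{1≤j≤m}|u(ξ^j)| for every u ∈ Σ_v(D_N). Let f ∈ C(Ω) and suppose that for each J with |J| = v a function u_J ∈ X_J satisfies max_{1≤j≤m}|f(ξ^j) − u_J(ξ^j)| ≤ max_{1≤j≤m}|f(ξ^j) − g(ξ^j)| for all g ∈ X_J. Then min over all J with |J| = v of ‖f − u_J‖_p is at most (2D + 1) σ_v(f, D_N)_∞. -/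

import Mathlib

open MeasureTheory

/-- The `L_p(μ)`-norm of a function `f`, `(∫ |f|^p dμ)^(1/p)`. -/
noncomputable def LpNorm {Ω : Type*} [MeasurableSpace Ω] (μ : Measure Ω) (p : ℝ)
    (f : Ω → ℝ) : ℝ :=
  (∫ ω, |f ω| ^ p ∂μ) ^ (1 / p)

/-- The uniform norm `sup_ω |f ω|`. -/
noncomputable def supNorm {Ω : Type*} (f : Ω → ℝ) : ℝ :=
  ⨆ ω, |f ω|

/-- `Σ_v(D_N)`: the set of `v`-term approximants with respect to the system `g`. -/
def sigmaSet {Ω : Type*} [TopologicalSpace Ω] {N : ℕ} (v : ℕ) (g : Fin N → C(Ω, ℝ)) :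
    Set C(Ω, ℝ) :=
  {u | ∃ J : Finset (Fin N), J.card = v ∧ u ∈ Submodule.span ℝ (g '' ↑J)}

/-- `σ_v(f, D_N)_∞`: the best `v`-term approximation of `f` in the uniform norm. -/
noncomputable def bestVTerm {Ω : Type*} [TopologicalSpace Ω] {N : ℕ}
    (v : ℕ) (g : Fin N → C(Ω, ℝ)) (f : C(Ω, ℝ)) : ℝ :=
  ⨅ h : sigmaSet v g, supNorm (fun ω => f ω - (h : C(Ω, ℝ)) ω)

theorem LpNorm_eq_aux {Ω : Type*} [MeasurableSpace Ω] (μ : Measure Ω) (p : ℝ) (hp : 1 ≤ p)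
    (f : Ω → ℝ) (hf : MemLp f (ENNReal.ofReal p) μ) :
    LpNorm μ p f = (eLpNorm f (ENNReal.ofReal p) μ).toReal := by
  have h0 : ENNReal.ofReal p ≠ 0 := by
    simp only [ne_eq, ENNReal.ofReal_eq_zero, not_le]; linarith
  have hpp : (ENNReal.ofReal p).toReal = p := ENNReal.toReal_ofReal (by linarith)
  rw [hf.eLpNorm_eq_integral_rpow_norm h0 ENNReal.ofReal_ne_top, ENNReal.toReal_ofReal, hpp]
  · simp [LpNorm, Real.norm_eq_abs]
  · positivity

theorem memLp_aux {Ω : Type*} [TopologicalSpace Ω] [CompactSpace Ω] [MeasurableSpace Ω]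
    [BorelSpace Ω] (μ : Measure Ω) [IsProbabilityMeasure μ] (q : ENNReal) (f : C(Ω, ℝ)) :
    MemLp (⇑f) q μ :=
  MemLp.of_bound f.continuous.measurable.aestronglyMeasurable ‖f‖
    (Filter.Eventually.of_forall fun x => f.norm_coe_le_norm x)

theorem key_aux {Ω : Type*} [TopologicalSpace Ω] [CompactSpace Ω] [MeasurableSpace Ω]
    [BorelSpace Ω] (μ : Measure Ω) [IsProbabilityMeasure μ] (p : ℝ) (hp : 1 ≤ p)
    (f h u : C(Ω, ℝ)) (S : ℝ) (hS : ∀ x, |f x - h x| ≤ S) (hS0 : 0 ≤ S) :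
    LpNorm μ p (fun x => f x - u x) ≤ S + LpNorm μ p ⇑(h - u) := by
  have h1 := memLp_aux μ (ENNReal.ofReal p) (f - h)
  have h2 := memLp_aux μ (ENNReal.ofReal p) (h - u)
  have h3 := memLp_aux μ (ENNReal.ofReal p) (f - u)
  have e : (fun x => f x - u x) = ⇑(f - u) := rfl
  rw [e, LpNorm_eq_aux μ p hp _ h3, LpNorm_eq_aux μ p hp _ h2]
  have e2 : ⇑(f - u) = ⇑(f - h) + ⇑(h - u) := by
    ext x; simp
  have hp1 : (1 : ENNReal) ≤ ENNReal.ofReal p := by simpa using hp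
  have t := eLpNorm_add_le h1.1 h2.1 hp1
  have b : eLpNorm (⇑(f - h)) (ENNReal.ofReal p) μ ≤ ENNReal.ofReal S := by
    have := eLpNorm_le_of_ae_bound (p := ENNReal.ofReal p) (μ := μ) (f := ⇑(f - h)) (C := S)
      (Filter.Eventually.of_forall fun x => by simpa using hS x)
    simpa using this
  have b' : (eLpNorm (⇑(f - h)) (ENNReal.ofReal p) μ).toReal ≤ S :=
    ENNReal.toReal_le_of_le_ofReal hS0 b
  have t' := ENNReal.toReal_mono (ENNReal.add_ne_top.2 ⟨h1.2.ne, h2.2.ne⟩) t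
  rw [ENNReal.toReal_add h1.2.ne h2.2.ne] at t'
  rw [e2]
  linarith

/-- Theorem 6.1: under the universal LDI(p,∞) for the collection `X_v(D_N)`,
if for every `J` of cardinality `v` the element `u_J ∈ X_J` minimizes the discrete uniform
distance to the data of `f`, then `min_J ‖f - u_J‖_p ≤ (2D + 1) σ_v(f, D_N)_∞`. -/
theorem stmt_15 (dd : ℕ) (Ω : Set (Fin dd → ℝ)) (hΩ : IsCompact Ω)
    (μ : Measure Ω) [IsProbabilityMeasure μ]
    (p : ℝ) (hp : 1 ≤ p)
    (m v N : ℕ) (hvN : v ≤ N)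
    (g : Fin N → C(Ω, ℝ))
    (ξ : Fin m → Ω) (D : ℝ) (hD : 0 < D)
    (hLDI : ∀ u ∈ sigmaSet v g, LpNorm μ p ⇑u ≤ D * ⨆ j, |u (ξ j)|)
    (f : C(Ω, ℝ)) (uJ : Finset (Fin N) → C(Ω, ℝ))
    (huJ_mem : ∀ J : Finset (Fin N), J.card = v → uJ J ∈ Submodule.span ℝ (g '' ↑J))
    (huJ_min : ∀ J : Finset (Fin N), J.card = v →
      ∀ h ∈ Submodule.span ℝ (g '' ↑J),
        (⨆ j, |f (ξ j) - uJ J (ξ j)|) ≤ ⨆ j, |f (ξ j) - h (ξ j)|) :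
    (⨅ J : {J : Finset (Fin N) // J.card = v},
        LpNorm μ p (fun ω => f ω - uJ J.val ω))
      ≤ (2 * D + 1) * bestVTerm v g f := by
  haveI : CompactSpace Ω := isCompact_iff_compactSpace.1 hΩ
  obtain ⟨J₀, -, hJ₀⟩ := Finset.exists_subset_card_eq (s := (Finset.univ : Finset (Fin N)))
    (n := v) (by simpa using hvN)
  haveI : Nonempty (sigmaSet v g) := ⟨⟨uJ J₀, J₀, hJ₀, huJ_mem J₀ hJ₀⟩⟩
  unfold bestVTerm
  rw [Real.mul_iInf_of_nonneg (by positivity)]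
  refine le_ciInf ?_
  rintro ⟨h, J, hJ, hh⟩
  refine (ciInf_le (Set.finite_range _).bddBelow (⟨J, hJ⟩ : {J : Finset (Fin N) // J.card = v})).trans ?_
  set S := supNorm (fun ω => f ω - h ω) with hSdef
  have hS0 : 0 ≤ S := Real.iSup_nonneg fun _ => abs_nonneg _
  have hS : ∀ x, |f x - h x| ≤ S := fun x =>
    le_ciSup (f := fun x => |f x - h x|)
      ⟨‖f - h‖, by rintro _ ⟨y, rfl⟩; exact (f - h).norm_coe_le_norm y⟩ x
  have hk := key_aux μ p hp f h (uJ J) S hS hS0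
  have hl := hLDI (h - uJ J) ⟨J, hJ, Submodule.sub_mem _ hh (huJ_mem J hJ)⟩
  have hm := huJ_min J hJ h hh
  have hm2 : (⨆ j, |f (ξ j) - h (ξ j)|) ≤ S := Real.iSup_le (fun j => hS _) hS0
  have hm3 : (⨆ j, |(h - uJ J) (ξ j)|) ≤ 2 * S := by
    refine Real.iSup_le (fun j => ?_) (by positivity)
    have a1 := le_ciSup (f := fun j => |f (ξ j) - uJ J (ξ j)|) (Set.finite_range _).bddAbove j
    have a2 := hS (ξ j)
    have a3 : |f (ξ j) - uJ J (ξ j)| ≤ S := a1.trans (hm.trans hm2)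
    simp only [ContinuousMap.sub_apply]
    rw [abs_le] at *
    constructor <;> linarith [a2.1, a2.2, a3.1, a3.2]
  have := mul_le_mul_of_nonneg_left hm3 hD.le
  show LpNorm μ p (fun ω => f ω - uJ J ω) ≤ (2 * D + 1) * S
  linarith
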